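/- arXiv:math/0002037 — 2 statements merged into one kernel-verified Lean document; each statement's English description precedes it below -/
import Mathlib

section
/- Let M ≥ 1, let ω : Fin M → ℂ, and suppose that the family of complex numbers consisting of ω₁, …, ω_M together with π·i is linearly independent over ℚ (ℂ being regarded as a vector space over ℚ). Let a : Fin M → ℂ. If for every integer N one has ∑_{j} a_j · exp(N · ω_j) = 0, then a_j = 0 for every j. In other words, the coefficients of an exponential polynomial whose exponents are, together with πi, rationally independent are uniquely determined by its values at the integers. -/
/-!
The numbers `exp (ω j)` are pairwise distinct: `exp (ω i) = exp (ω j)` forces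
`ω i - ω j ∈ 2πi ℤ`, a nontrivial rational relation between `ω i`, `ω j` and `πi` when `i ≠ j`.
The vanishing at `N = 0, …, M - 1` is then a homogeneous linear system in the `a j` whose
matrix is the invertible Vandermonde matrix of the `exp (ω j)`.
-/

/-- Lemma (6.8): an exponential polynomial whose exponents, together with `π·i`,
are linearly independent over `ℚ`, and which vanishes at all integers, has all
coefficients zero. -/
theorem exponential_polynomial_coeffs_determined_by_integer_values
    (M : ℕ) (hM : 1 ≤ M) (ω : Fin M → ℂ)
    (hindep : LinearIndependent ℚ
      (Sum.elim ω (fun _ : Unit => (Real.pi : ℂ) * Complex.I)))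
    (a : Fin M → ℂ)
    (hvanish : ∀ N : ℤ, ∑ j, a j * Complex.exp ((N : ℂ) * ω j) = 0) :
    ∀ j, a j = 0 := by
  have hinj : Function.Injective fun j => Complex.exp (ω j) := by
    intro i j hij
    obtain ⟨n, hn⟩ := Complex.exp_eq_exp_iff_exists_int.1 hij
    by_contra hne
    -- The coefficients of the relation `ω i - ω j - 2n · πi = 0`.
    have h := Fintype.linearIndependent_iff.1 hindep
      (Sum.elim (Pi.single i 1 - Pi.single j 1) (fun _ => -2 * (n : ℚ))) (by
        simp only [Fintype.sum_sum_type, Sum.elim_inl, Sum.elim_inr, Pi.sub_apply, sub_smul,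
          Finset.sum_sub_distrib, Pi.single_apply, ite_smul, one_smul, zero_smul,
          Finset.sum_ite_eq', Finset.mem_univ, if_true, hn]
        simp [Rat.smul_def]
        ring) (Sum.inl i)
    simp [hne] at h
  have ha : a = 0 := Matrix.eq_zero_of_forall_pow_sum_mul_pow_eq_zero hinj fun N => by
    simpa [← Complex.exp_nat_mul] using hvanish (N : ℕ)
  exact fun j => congrFun ha j
end

section
/- Let n ≥ 1 and ρ : Fin n → ℂ, and let S_ρ be the substitution endomorphism of ℂ[x₁,…,xₙ] determined by x_i ↦ ρ_i·x_i. Let d ∈ ℂ[x₁,…,xₙ] be a polynomial such that every multi-index a in the support of d is non-resonant for ρ, i.e. ∏_i ρ_i^{a_i} ≠ 1. Then there exists a unique polynomial q ∈ ℂ[x₁,…,xₙ] whose support is contained in the support of d and which satisfies S_ρ(q) − q = d. Explicitly, the coefficient of x^a in q equals (∏_i ρ_i^{a_i} − 1)⁻¹ times the coefficient of x^a in d. -/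
/-!
The substitution `S_ρ` is diagonal in the monomial basis: it multiplies the coefficient of `x^a`
by `∏ i, ρ i ^ a i` (`coeff_aeval_C_mul_X`). The equation `S_ρ q - q = d` therefore decouples into
the scalar equations `(∏ i, ρ i ^ a i - 1) * q_a = d_a`. On the support of `d` the factor is
invertible, and off the support both `q_a` and `d_a` vanish.
-/

open MvPolynomial

theorem coeff_aeval_C_mul_X {n : ℕ} (ρ : Fin n → ℂ) (q : MvPolynomial (Fin n) ℂ)
    (a : Fin n →₀ ℕ) :
    ((aeval (fun i => (C (ρ i) * X i : MvPolynomial (Fin n) ℂ))) q).coeff a =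
      (∏ i, ρ i ^ a i) * q.coeff a := by
  induction q using MvPolynomial.induction_on' with
  | add p q hp hq => rw [map_add, coeff_add, coeff_add, hp, hq, mul_add]
  | monomial b c =>
    have h : (aeval (fun i => (C (ρ i) * X i : MvPolynomial (Fin n) ℂ))) (monomial b c) =
        monomial b ((∏ i, ρ i ^ b i) * c) := by
      rw [aeval_monomial, monomial_eq, Finsupp.prod_fintype _ _ (by simp),
        Finsupp.prod_fintype _ _ (by simp)]
      simp only [mul_pow, Finset.prod_mul_distrib, algebraMap_eq, C_mul, map_prod, C_pow]
      ring
    rw [h, coeff_monomial, coeff_monomial]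
    split_ifs with hab
    · rw [hab]
    · rw [mul_zero]

/-- Solvability of the homological equation (3.6)–(3.9): if every multi-index in
the support of `d` is non-resonant for `ρ`, then there is a unique polynomial
`q` supported in the support of `d` with `S_ρ(q) − q = d`, and its coefficients
are given explicitly by `q_a = (∏ ρᵢ^{aᵢ} − 1)⁻¹ d_a`. -/
theorem homological_equation_solvable
    (n : ℕ) (hn : 1 ≤ n) (ρ : Fin n → ℂ)
    (d : MvPolynomial (Fin n) ℂ)
    (hd : ∀ a ∈ d.support, (∏ i, ρ i ^ a i) ≠ 1) :
    (∃! q : MvPolynomial (Fin n) ℂ,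
        q.support ⊆ d.support ∧
        (aeval (fun i => (C (ρ i) * X i : MvPolynomial (Fin n) ℂ))) q - q = d) ∧
    (∀ q : MvPolynomial (Fin n) ℂ,
      q.support ⊆ d.support →
      (aeval (fun i => (C (ρ i) * X i : MvPolynomial (Fin n) ℂ))) q - q = d →
      ∀ a : Fin n →₀ ℕ, q.coeff a = ((∏ i, ρ i ^ a i) - 1)⁻¹ * d.coeff a) := by
  have key : ∀ q : MvPolynomial (Fin n) ℂ,
      q.support ⊆ d.support →
      (aeval (fun i => (C (ρ i) * X i : MvPolynomial (Fin n) ℂ))) q - q = d →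
      ∀ a : Fin n →₀ ℕ, q.coeff a = ((∏ i, ρ i ^ a i) - 1)⁻¹ * d.coeff a := by
    intro q hq h a
    by_cases ha : a ∈ d.support
    · have hne := sub_ne_zero.mpr (hd a ha)
      rw [eq_inv_mul_iff_mul_eq₀ hne, ← h, coeff_sub, coeff_aeval_C_mul_X]
      ring
    · rw [notMem_support_iff.mp ha, notMem_support_iff.mp fun h' => ha (hq h'), mul_zero]
  refine ⟨?_, key⟩
  let q : MvPolynomial (Fin n) ℂ :=
    ∑ a ∈ d.support, monomial a (((∏ i, ρ i ^ a i) - 1)⁻¹ * d.coeff a)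
  have hcoeff : ∀ a, q.coeff a = ((∏ i, ρ i ^ a i) - 1)⁻¹ * d.coeff a := by
    intro a
    simp only [q, coeff_sum, coeff_monomial, Finset.sum_ite_eq']
    split_ifs with ha
    · rfl
    · rw [notMem_support_iff.mp ha, mul_zero]
  refine ⟨q, ⟨?_, ?_⟩, ?_⟩
  · intro a ha
    rw [mem_support_iff, hcoeff] at ha
    exact mem_support_iff.mpr (right_ne_zero_of_mul ha)
  · ext a
    rw [coeff_sub, coeff_aeval_C_mul_X, ← sub_one_mul, hcoeff]
    by_cases ha : a ∈ d.support
    · exact mul_inv_cancel_left₀ (sub_ne_zero.mpr (hd a ha)) _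
    · rw [notMem_support_iff.mp ha, mul_zero, mul_zero]
  · rintro p ⟨hp, hpd⟩
    ext a
    rw [key p hp hpd, hcoeff]
end
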